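/- For every prime p with p ∤ 2·3·27 = 2·81, the polynomial x^3 - 2 has exactly 3 roots modulo p if and only if there exist integers X, Y with p = X^2 + 27Y^2. -/

import Mathlib

/-!
Let `p ≡ 1 (mod 3)` be an odd prime and let `χ` be a cubic character of `𝔽_p` with values in the
Eisenstein integers `ℤ[ω]`. The Jacobi sum `J = J(χ, χ) = a + bω` has norm `p`, and
`J ≡ -1 (mod 3)` gives `3 ∣ b`. The involution `u ↦ 1 - u` pairs the terms of
`J = ∑ χ(u) χ(1 - u)`, so modulo `2` only the fixed point `u = 1/2` survives:
`J ≡ χ(1/4) = χ(2) (mod 2)`. Hence `2` is a cube modulo `p` if and only if `b` is even. On the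
other hand `4p = (2a - b) ^ 2 + 27 (b / 3) ^ 2`, and since `4p` has only one representation by
`A ^ 2 + 27 B ^ 2` up to signs, `b` is even if and only if this representation is twice a
representation of `p` by `X ^ 2 + 27 Y ^ 2`. If `p ≡ 2 (mod 3)`, then cubing is injective on `𝔽_p`,
and `p`, not being a square modulo `3`, is not of the form `X ^ 2 + 27 Y ^ 2`.
-/

lemma sq_eq_sq_of_prime_of_mul_eq_sq_add_mul_sq {p k n a b c d : ℤ} (hp : Prime p) (hk : k ≠ 0)
    (hkn : k ^ 2 < n) (hab : k * p = a ^ 2 + n * b ^ 2) (hcd : k * p = c ^ 2 + n * d ^ 2) :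
    b ^ 2 = d ^ 2 := by
  have hfactor : (a * d - b * c) * (a * d + b * c) = p * (k * (d ^ 2 - b ^ 2)) := by
    linear_combination b ^ 2 * hcd - d ^ 2 * hab
  have hsub : (k * p) ^ 2 = (a * c + n * b * d) ^ 2 + n * (a * d - b * c) ^ 2 := by
    linear_combination k * p * hab + (a ^ 2 + n * b ^ 2) * hcd
  have hadd : (k * p) ^ 2 = (a * c - n * b * d) ^ 2 + n * (a * d + b * c) ^ 2 := by
    linear_combination k * p * hab + (a ^ 2 + n * b ^ 2) * hcd
  have eq_zero_of_dvd {u v : ℤ} (huv : (k * p) ^ 2 = u ^ 2 + n * v ^ 2) (hv : p ∣ v) : v = 0 := by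
    obtain ⟨w, rfl⟩ := hv
    by_contra hw
    have hw_sq : 1 ≤ w ^ 2 := sq_pos_of_ne_zero (right_ne_zero_of_mul hw)
    nlinarith [sq_nonneg u, sq_pos_of_ne_zero hp.ne_zero]
  have hprod : (a * d - b * c) * (a * d + b * c) = 0 := by
    rcases hp.dvd_or_dvd (Dvd.intro _ hfactor.symm) with h | h
    · rw [eq_zero_of_dvd hsub h, zero_mul]
    · rw [eq_zero_of_dvd hadd h, mul_zero]
  have hdiff : k * (d ^ 2 - b ^ 2) = 0 :=
    (mul_eq_zero.mp (hfactor.symm.trans hprod)).resolve_left hp.ne_zero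
  linarith [(mul_eq_zero.mp hdiff).resolve_left hk]

lemma three_dvd_sub_one_of_eq_sq_add_three_mul {n : ℕ} {x y : ℤ} (hn : ¬ 3 ∣ n)
    (h : (n : ℤ) = x ^ 2 + 3 * y) : 3 ∣ n - 1 := by
  have hx : x ^ 2 % 3 = 0 ∨ x ^ 2 % 3 = 1 := by
    have : x % 3 = 0 ∨ x % 3 = 1 ∨ x % 3 = 2 := by omega
    rcases this with h | h | h <;> simp [sq, Int.mul_emod, h]
  omega

section FiniteField

lemma mulChar_apply_eq_one_iff_exists_pow_eq {F R : Type*} [Field F] [Finite F] [CommRing R]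
    {χ : MulChar F R} {n : ℕ} (hχ : orderOf χ = n) {a : F} (ha : a ≠ 0) :
    χ a = 1 ↔ ∃ r, r ^ n = a := by
  subst hχ
  obtain ⟨g, hg⟩ := IsCyclic.exists_generator (α := Fˣ)
  have horder : orderOf (χ g) = orderOf χ :=
    orderOf_eq_orderOf_iff.mpr fun k ↦ by
      rw [MulChar.eq_iff hg, MulChar.pow_apply_coe, MulChar.one_apply_coe]
  constructor
  · intro h
    obtain ⟨k, hk⟩ := mem_powers_iff_mem_zpowers.mpr (hg (Units.mk0 a ha))
    have hgk : (g : F) ^ k = a := by simpa using congrArg Units.val hk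
    obtain ⟨m, rfl⟩ : orderOf χ ∣ k := by
      rw [← horder]
      exact orderOf_dvd_of_pow_eq_one (by rw [← map_pow, hgk, h])
    exact ⟨(g : F) ^ m, by rw [← hgk, ← pow_mul, mul_comm]⟩
  · rintro ⟨r, rfl⟩
    have hr : r ≠ 0 := fun h ↦ ha (by rw [h, zero_pow χ.orderOf_pos.ne'])
    rw [map_pow, ← MulChar.pow_apply' χ χ.orderOf_pos.ne', pow_orderOf_eq_one,
      MulChar.one_apply hr.isUnit]

variable {F : Type*} [Field F] [Fintype F]

lemma card_filter_pow_eq_pow [DecidableEq F] {n : ℕ} (hn : n ≠ 0) {r : F} (hr : r ≠ 0) :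
    ({x | x ^ n = r ^ n} : Finset F).card = (Fintype.card F - 1).gcd n := by
  have himage : ({x | x ^ n = r ^ n} : Finset F) =
      ({u | u ∈ (powMonoidHom n).ker} : Finset Fˣ).image fun u : Fˣ ↦ (u : F) * r := by
    ext x
    simp only [Finset.mem_filter, Finset.mem_univ, true_and, Finset.mem_image, MonoidHom.mem_ker,
      powMonoidHom_apply]
    constructor
    · intro hx
      have hx0 : x ≠ 0 := fun h ↦ pow_ne_zero n hr (by rw [← hx, h, zero_pow hn])
      refine ⟨Units.mk0 (x / r) (div_ne_zero hx0 hr), Units.ext ?_, div_mul_cancel₀ x hr⟩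
      simp [div_pow, hx, hr]
    · rintro ⟨u, hu, rfl⟩
      rw [mul_pow, ← Units.val_pow_eq_pow_val, hu, Units.val_one, one_mul]
  rw [himage, Finset.card_image_of_injective _ fun u v h ↦ Units.ext (mul_right_cancel₀ hr h),
    ← Fintype.card_units, ← Nat.card_eq_fintype_card, ← IsCyclic.card_powMonoidHom_ker,
    ← Fintype.card_subtype, ← Nat.card_eq_fintype_card]

lemma card_filter_pow_eq_iff [DecidableEq F] {n : ℕ} (hn : n ≠ 0) {a : F} (ha : a ≠ 0) :
    ({x | x ^ n = a} : Finset F).card = n ↔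
      n ∣ Fintype.card F - 1 ∧ ∃ r, r ^ n = a := by
  by_cases h : ∃ r, r ^ n = a
  · obtain ⟨r, rfl⟩ := h
    have hr : r ≠ 0 := fun h ↦ ha (by rw [h, zero_pow hn])
    rw [card_filter_pow_eq_pow hn hr, Nat.gcd_eq_right_iff_dvd]
    exact ⟨fun hdvd ↦ ⟨hdvd, r, rfl⟩, And.left⟩
  · have hempty : ({x | x ^ n = a} : Finset F) = ∅ := by
      simpa [Finset.filter_eq_empty_iff] using h
    simp [hempty, h, hn.symm]

lemma two_dvd_jacobiSum_self_sub {R : Type*} [CommRing R] (h2 : (2 : F) ≠ 0) (χ : MulChar F R) :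
    2 ∣ jacobiSum χ χ - χ 2⁻¹ ^ 2 := by
  classical
  have hhalf : (1 : F) - 2⁻¹ = 2⁻¹ := by field_simp; norm_num
  rw [jacobiSum, ← Finset.sum_erase_add _ _ (Finset.mem_univ (2⁻¹ : F)), hhalf, ← sq,
    add_sub_cancel_right, ← Ideal.mem_span_singleton, ← Ideal.Quotient.eq_zero_iff_mem, map_sum]
  have htwo : (2 : R ⧸ Ideal.span {(2 : R)}) = 0 :=
    Ideal.Quotient.eq_zero_iff_mem.mpr (Ideal.mem_span_singleton_self 2)
  have hfix : ∀ u : F, 1 - u = u → u = 2⁻¹ := fun u hu ↦ by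
    field_simp; linear_combination -hu
  refine Finset.sum_involution (fun u _ ↦ 1 - u) (fun u _ ↦ ?_) (fun u hu _ h ↦ ?_)
    (fun u hu ↦ ?_) (fun u _ ↦ sub_sub_cancel 1 u)
  · rw [sub_sub_cancel, mul_comm (χ (1 - u)), ← two_mul, htwo, zero_mul]
  · exact Finset.ne_of_mem_erase hu (hfix u h)
  · refine Finset.mem_erase.mpr ⟨fun h ↦ Finset.ne_of_mem_erase hu ?_, Finset.mem_univ _⟩
    rw [← sub_sub_cancel 1 u, h, hhalf]

lemma two_dvd_jacobiSum_self_sub_apply_two {R : Type*} [CommRing R] (h2 : (2 : F) ≠ 0)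
    {χ : MulChar F R} (hχ : χ ^ 3 = 1) : 2 ∣ jacobiSum χ χ - χ 2 := by
  have hinv : χ⁻¹ = χ ^ 2 := inv_eq_of_mul_eq_one_left (by rw [← pow_succ, hχ])
  have hhalf : χ 2⁻¹ ^ 2 = χ 2 := by
    rw [← MulChar.pow_apply' χ two_ne_zero, ← hinv, MulChar.inv_apply', inv_inv]
  exact hhalf ▸ two_dvd_jacobiSum_self_sub h2 χ

lemma jacobiSum_mul_jacobiSum_inv_of_isDomain {R : Type*} [CommRing R] [IsDomain R]
    (h : ringChar R ≠ ringChar F) {χ φ : MulChar F R} (hχ : χ ≠ 1) (hφ : φ ≠ 1)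
    (hχφ : χ * φ ≠ 1) : jacobiSum χ φ * jacobiSum χ⁻¹ φ⁻¹ = Fintype.card F := by
  let f := algebraMap R (FractionRing R)
  have hf : Function.Injective f := IsFractionRing.injective R (FractionRing R)
  apply hf
  rw [map_mul, ← jacobiSum_ringHomComp, ← jacobiSum_ringHomComp, ← MulChar.ringHomComp_inv,
    ← MulChar.ringHomComp_inv, jacobiSum_mul_jacobiSum_inv, map_natCast]
  · have := IsFractionRing.charP_of_isFractionRing (R := R) (K := FractionRing R) (ringChar R)
    rwa [ringChar.eq (FractionRing R) (ringChar R)]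
  · exact (MulChar.ringHomComp_ne_one_iff hf).mpr hχ
  · exact (MulChar.ringHomComp_ne_one_iff hf).mpr hφ
  · rw [← MulChar.ringHomComp_mul]
    exact (MulChar.ringHomComp_ne_one_iff hf).mpr hχφ

end FiniteField

/-- The ring `ℤ[ω]` of Eisenstein integers with `ω ^ 2 = -1 - ω`, in which the cubic characters
take their values; the norm of `a + bω` is `a ^ 2 - a b + b ^ 2`. -/
abbrev EisensteinInt : Type := QuadraticAlgebra ℤ (-1) (-1)

namespace EisensteinInt

open QuadraticAlgebra

lemma four_mul_norm (z : EisensteinInt) :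
    4 * z.norm = (2 * z.re - z.im) ^ 2 + 3 * z.im ^ 2 := by
  rw [norm_def]; ring

lemma norm_nonneg (z : EisensteinInt) : 0 ≤ z.norm := by
  linarith [four_mul_norm z, sq_nonneg (2 * z.re - z.im), sq_nonneg z.im]

lemma norm_eq_zero {z : EisensteinInt} : z.norm = 0 ↔ z = 0 := by
  refine ⟨fun h ↦ ?_, by rintro rfl; exact norm_zero⟩
  have him : z.im = 0 := by nlinarith [four_mul_norm z]
  have hre : z.re = 0 := by nlinarith [four_mul_norm z]
  exact QuadraticAlgebra.ext hre him

instance : NoZeroDivisors EisensteinInt where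
  eq_zero_or_eq_zero_of_mul_eq_zero {z w} h := by
    simpa only [← norm_eq_zero, map_mul, mul_eq_zero] using h

instance : IsDomain EisensteinInt := NoZeroDivisors.to_isDomain _

lemma isPrimitiveRoot_omega : IsPrimitiveRoot (ω : EisensteinInt) 3 := by
  have : Fact (Nat.Prime 3) := ⟨Nat.prime_three⟩
  refine IsPrimitiveRoot.iff_orderOf.mpr (orderOf_eq_prime ?_ ?_)
  · ext <;> simp [pow_succ]
  · intro h
    simpa using congrArg im h

lemma two_dvd_im_iff_of_pow_three_eq_one {z : EisensteinInt} (hz : z ^ 3 = 1) :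
    2 ∣ z.im ↔ z = 1 := by
  obtain ⟨k, hk, rfl⟩ := isPrimitiveRoot_omega.eq_pow_of_pow_eq_one hz
  interval_cases k <;> simp [sq, QuadraticAlgebra.ext_iff]

lemma norm_eq_one_of_isUnit {z : EisensteinInt} (hz : IsUnit z) : z.norm = 1 :=
  (Int.isUnit_iff.mp (isUnit_iff_norm_isUnit.mp hz)).resolve_right fun h ↦ by
    linarith [norm_nonneg z]

lemma ringHomComp_starRingEnd {M : Type*} [CommMonoid M] (χ : MulChar M EisensteinInt) :
    χ.ringHomComp (starRingEnd EisensteinInt) = χ⁻¹ := by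
  rw [eq_comm, inv_eq_iff_mul_eq_one]
  refine MulChar.ext fun u ↦ ?_
  rw [MulChar.mul_apply, MulChar.ringHomComp_apply, starRingEnd_apply,
    ← algebraMap_norm_eq_mul_star, norm_eq_one_of_isUnit (u.isUnit.map χ), map_one,
    MulChar.one_apply_coe]

variable {F : Type*} [Field F] [Fintype F]

lemma norm_jacobiSum {χ φ : MulChar F EisensteinInt} (hχ : χ ≠ 1) (hφ : φ ≠ 1) (hχφ : χ * φ ≠ 1) :
    (jacobiSum χ φ).norm = Fintype.card F := by
  have hchar : ringChar EisensteinInt ≠ ringChar F := by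
    rw [ringChar.eq_zero]
    exact (CharP.ringChar_ne_zero_of_finite F).symm
  have h := jacobiSum_mul_jacobiSum_inv_of_isDomain hchar hχ hφ hχφ
  rw [← ringHomComp_starRingEnd, ← ringHomComp_starRingEnd, jacobiSum_ringHomComp,
    starRingEnd_apply, ← algebraMap_norm_eq_mul_star] at h
  exact algebraMap_injective (by rw [h, map_natCast])

lemma three_dvd_im_jacobiSum {χ ψ : MulChar F EisensteinInt} (hχ : χ ^ 3 = 1) (hψ : ψ ^ 3 = 1)
    (hF : 3 ∣ Fintype.card F - 1) : 3 ∣ (jacobiSum χ ψ).im := by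
  obtain ⟨z, -, hz⟩ :=
    exists_jacobiSum_eq_neg_one_add (by norm_num) hχ hψ hF isPrimitiveRoot_omega
  refine ⟨z.im - z.re, ?_⟩
  rw [hz]
  simp only [sq, im_add, im_neg, im_one, im_mul, re_mul, im_sub, re_sub, re_one, omega_re, omega_im]
  ring

lemma two_dvd_im_jacobiSum_self_iff (h2 : (2 : F) ≠ 0) {χ : MulChar F EisensteinInt}
    (hχ : orderOf χ = 3) : 2 ∣ (jacobiSum χ χ).im ↔ ∃ r : F, r ^ 3 = 2 := by
  have hχ3 : χ ^ 3 = 1 := hχ ▸ pow_orderOf_eq_one χ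
  have hroot : χ 2 ^ 3 = 1 := by
    rw [← MulChar.pow_apply' χ three_ne_zero, hχ3, MulChar.one_apply h2.isUnit]
  rw [← mulChar_apply_eq_one_iff_exists_pow_eq hχ h2, ← two_dvd_im_iff_of_pow_three_eq_one hroot]
  have him : 2 ∣ (jacobiSum χ χ - χ 2).im :=
    (algebraMap_dvd_iff.mp (two_dvd_jacobiSum_self_sub_apply_two h2 hχ3)).2
  exact dvd_iff_dvd_of_dvd_sub him

theorem exists_norm_eq_card_and_two_dvd_im_iff (h2 : (2 : F) ≠ 0) (hF : 3 ∣ Fintype.card F - 1) :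
    ∃ z : EisensteinInt, z.norm = Fintype.card F ∧ 3 ∣ z.im ∧ (2 ∣ z.im ↔ ∃ r : F, r ^ 3 = 2) := by
  obtain ⟨χ, hχ⟩ := MulChar.exists_mulChar_orderOf F hF isPrimitiveRoot_omega
  have hχ3 : χ ^ 3 = 1 := hχ ▸ pow_orderOf_eq_one χ
  have hχ1 : χ ≠ 1 := pow_one χ ▸ pow_ne_one_of_lt_orderOf one_ne_zero (by lia)
  have hχ2 : χ * χ ≠ 1 := sq χ ▸ pow_ne_one_of_lt_orderOf two_ne_zero (by lia)
  exact ⟨jacobiSum χ χ, norm_jacobiSum hχ1 hχ1 hχ2, three_dvd_im_jacobiSum hχ3 hχ3 hF,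
    two_dvd_im_jacobiSum_self_iff h2 hχ⟩

lemma exists_eq_sq_add_twentySeven_mul_sq_iff {p : ℕ} (hp : p.Prime) {z : EisensteinInt}
    (hnorm : z.norm = p) (h3 : 3 ∣ z.im) :
    (∃ X Y : ℤ, (p : ℤ) = X ^ 2 + 27 * Y ^ 2) ↔ 2 ∣ z.im := by
  obtain ⟨c, hc⟩ := h3
  constructor
  · rintro ⟨X, Y, hXY⟩
    have hsq : c ^ 2 = (2 * Y) ^ 2 :=
      sq_eq_sq_of_prime_of_mul_eq_sq_add_mul_sq (k := 4) (n := 27) (a := 2 * z.re - z.im)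
        (c := 2 * X) (Nat.prime_iff_prime_int.mp hp) (by norm_num) (by norm_num)
        (by rw [← hnorm, four_mul_norm, hc]; ring) (by rw [hXY]; ring)
    have hcY : c = 2 * Y ∨ c = -(2 * Y) := sq_eq_sq_iff_eq_or_eq_neg.mp hsq
    lia
  · intro h2
    obtain ⟨Y, hY⟩ : 6 ∣ z.im := by lia
    exact ⟨z.re - 3 * Y, Y, by rw [← hnorm, norm_def, hY]; ring⟩

end EisensteinInt

theorem gauss_cubic_reciprocity (p : ℕ) [Fact p.Prime] (hpe : ¬ (p ∣ 2 * 3 * 27)) :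
    (Finset.univ.filter (fun a : ZMod p => a ^ 3 - 2 = 0)).card = 3 ↔
      ∃ X Y : ℤ, (p : ℤ) = X ^ 2 + 27 * Y ^ 2 := by
  have hp : p.Prime := Fact.out
  have h2 : (2 : ZMod p) ≠ 0 := fun h ↦
    hpe (((ZMod.natCast_eq_zero_iff 2 p).mp (mod_cast h)).trans (by norm_num))
  have h3 : ¬ 3 ∣ p := fun h ↦
    hpe ((Nat.prime_dvd_prime_iff_eq Nat.prime_three hp).mp h ▸ by norm_num)
  simp only [sub_eq_zero]
  rw [card_filter_pow_eq_iff three_ne_zero h2, ZMod.card]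
  have hform (hdvd : 3 ∣ p - 1) :
      (∃ r : ZMod p, r ^ 3 = 2) ↔ ∃ X Y : ℤ, (p : ℤ) = X ^ 2 + 27 * Y ^ 2 := by
    obtain ⟨z, hnorm, him, hcube⟩ :=
      EisensteinInt.exists_norm_eq_card_and_two_dvd_im_iff h2 (by rwa [ZMod.card])
    rw [ZMod.card] at hnorm
    rw [← hcube, EisensteinInt.exists_eq_sq_add_twentySeven_mul_sq_iff hp hnorm him]
  constructor
  · rintro ⟨hdvd, hr⟩
    exact (hform hdvd).mp hr
  · rintro ⟨X, Y, hXY⟩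
    have hdvd : 3 ∣ p - 1 :=
      three_dvd_sub_one_of_eq_sq_add_three_mul (y := 9 * Y ^ 2) h3 (by rw [hXY]; ring)
    exact ⟨hdvd, (hform hdvd).mpr ⟨X, Y, hXY⟩⟩
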